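/- Under the standing assumptions (diagonal self-affine measure μ on ℝ^d with distinct Lyapunov exponents χ₁ < … < χ_d, linear parts in a 1-dimensional subgroup), suppose dim π_{[d−1]} μ = d−1. Then lim_{n→∞} (1/n)·H(μ, 𝓔_n) = κ, where κ := χ_d·dim μ − Σ_{j=1}^{d−1}(χ_d − χ_j). -/

import Mathlib

open MeasureTheory Finset

/-- The cell of the level-`n` non-conformal partition `𝓔_n` of `ℝ^d`. -/
noncomputable def Ecell (d : ℕ) (χ : Fin d → ℝ) (n : ℕ) (k : Fin d → ℤ) :
    Set (Fin d → ℝ) :=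
  {x | ∀ j, (k j : ℝ) / 2 ^ ⌊χ j * n⌋ ≤ x j ∧ x j < ((k j : ℝ) + 1) / 2 ^ ⌊χ j * n⌋}

/-- Entropy (base 2) of a measure on `ℝ^d` with respect to `𝓔_n`. -/
noncomputable def entE (d : ℕ) (χ : Fin d → ℝ) (n : ℕ) (θ : Measure (Fin d → ℝ)) : ℝ :=
  ∑' k : Fin d → ℤ,
    -((θ (Ecell d χ n k)).toReal * Real.logb 2 (θ (Ecell d χ n k)).toReal)


lemma real_compare {ι κ : Type*} (S1 : Finset ι) (S2 : Finset κ) (a : ι → κ → ℝ)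
    (ha : ∀ i k, 0 ≤ a i k) (hsum : ∑ i ∈ S1, ∑ k ∈ S2, a i k = 1) (N : ℝ) (hN : 0 < N)
    (hcard : ∀ i ∈ S1, ∑ k ∈ S2, (if a i k ≠ 0 then (1:ℝ) else 0) ≤ N) :
    ∑ k ∈ S2, Real.negMulLog (∑ i ∈ S1, a i k) ≤
      ∑ i ∈ S1, Real.negMulLog (∑ k ∈ S2, a i k) + Real.log N := by
  set P : ι → ℝ := fun i => ∑ k ∈ S2, a i k with hP
  set Q : κ → ℝ := fun k => ∑ i ∈ S1, a i k with hQ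
  have hP0 : ∀ i, 0 ≤ P i := fun i => Finset.sum_nonneg fun k _ => ha i k
  have key : ∀ i ∈ S1, ∀ k ∈ S2, a i k * (-Real.log (Q k)) ≤
      a i k * (-Real.log (P i)) + a i k * Real.log N +
        ((if a i k ≠ 0 then (1:ℝ) else 0) * (P i / N) - a i k) := by
    intro i hi k hk
    by_cases h0 : a i k = 0
    · simp [h0]
    have hpos : 0 < a i k := lt_of_le_of_ne (ha i k) (Ne.symm h0)
    have h1 : a i k ≤ P i := Finset.single_le_sum (f := fun k => a i k) (fun k _ => ha i k) hk
    have h2 : a i k ≤ Q k := Finset.single_le_sum (f := fun i => a i k) (fun i _ => ha i k) hi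
    have hPp : 0 < P i := hpos.trans_le h1
    have hQp : 0 < Q k := hpos.trans_le h2
    have hl := Real.log_le_sub_one_of_pos (x := P i / (N * Q k)) (by positivity)
    rw [Real.log_div hPp.ne' (by positivity), Real.log_mul hN.ne' hQp.ne'] at hl
    have h3 := mul_le_mul_of_nonneg_left hl hpos.le
    have h4 : a i k * (P i / (N * Q k)) ≤ P i / N := by
      rw [← div_div, mul_div_assoc', div_le_iff₀ hQp, mul_comm]
      exact mul_le_mul_of_nonneg_left h2 (by positivity)
    simp only [ne_eq, h0, not_false_eq_true, if_true, one_mul]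
    nlinarith
  have hs := Finset.sum_le_sum fun i hi => Finset.sum_le_sum fun k hk => key i hi k hk
  simp only [Finset.sum_add_distrib, Finset.sum_sub_distrib, ← Finset.sum_mul] at hs
  have e1 : ∑ i ∈ S1, ∑ k ∈ S2, a i k * (-Real.log (Q k)) = ∑ k ∈ S2, Real.negMulLog (Q k) := by
    rw [Finset.sum_comm]
    refine Finset.sum_congr rfl fun k _ => ?_
    rw [← Finset.sum_mul, Real.negMulLog]; simp only [hQ]; ring
  rw [e1] at hs
  have e2 : ∑ i ∈ S1, (∑ k ∈ S2, a i k) * (-Real.log (P i)) = ∑ i ∈ S1, Real.negMulLog (P i) := by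
    refine Finset.sum_congr rfl fun k _ => ?_
    rw [Real.negMulLog]; simp only [hP]; ring
  rw [e2] at hs
  have e3 : ∑ i ∈ S1, (∑ k ∈ S2, (if a i k ≠ 0 then (1:ℝ) else 0)) * (P i / N) ≤ 1 := by
    calc _ ≤ ∑ i ∈ S1, N * (P i / N) := Finset.sum_le_sum fun i hi =>
          mul_le_mul_of_nonneg_right (hcard i hi) (by have := hP0 i; positivity)
      _ = 1 := by
          rw [← hsum]; refine Finset.sum_congr rfl fun i _ => ?_
          field_simp
  have hsum2 : ∑ i ∈ S1, ∑ k ∈ S2, a i k = 1 := hsum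
  rw [hsum2] at hs
  simp only [hP, hQ] at hs e3 ⊢
  linarith

/-- superadditivity of the conditional entropy functional -/
lemma real_concave {Λ κ : Type*} (I : Finset Λ) (S : Finset κ) (u : Λ → κ → ℝ)
    (hu : ∀ i k, 0 ≤ u i k) :
    ∑ i ∈ I, (∑ k ∈ S, Real.negMulLog (u i k) - Real.negMulLog (∑ k ∈ S, u i k)) ≤
      ∑ k ∈ S, Real.negMulLog (∑ i ∈ I, u i k) - Real.negMulLog (∑ i ∈ I, ∑ k ∈ S, u i k) := by
  set U : Λ → ℝ := fun i => ∑ k ∈ S, u i k with hU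
  set V : κ → ℝ := fun k => ∑ i ∈ I, u i k with hV
  set T : ℝ := ∑ i ∈ I, ∑ k ∈ S, u i k with hT
  have hU0 : ∀ i, 0 ≤ U i := fun i => Finset.sum_nonneg fun k _ => hu i k
  have hV0 : ∀ i, 0 ≤ V i := fun k => Finset.sum_nonneg fun i _ => hu i k
  have hT1 : T = ∑ i ∈ I, U i := rfl
  have hT2 : T = ∑ k ∈ S, V k := Finset.sum_comm
  have hT0 : 0 ≤ T := Finset.sum_nonneg fun i _ => hU0 i
  have key : ∀ i ∈ I, ∀ k ∈ S, u i k * (-Real.log (u i k)) + u i k * Real.log (U i) ≤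
      u i k * (-Real.log (V k)) + u i k * Real.log T + (U i * (V k / T) - u i k) := by
    intro i hi k hk
    by_cases h0 : u i k = 0
    · simp only [h0, zero_mul, add_zero, zero_add, sub_zero]
      have := hU0 i; have := hV0 k; positivity
    have hpos : 0 < u i k := lt_of_le_of_ne (hu i k) (Ne.symm h0)
    have h1 : u i k ≤ U i := Finset.single_le_sum (f := fun k => u i k) (fun k _ => hu i k) hk
    have h2 : u i k ≤ V k := Finset.single_le_sum (f := fun i => u i k) (fun i _ => hu i k) hi
    have h3 : U i ≤ T := Finset.single_le_sum (f := U) (fun i _ => hU0 i) hi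
    have hUp : 0 < U i := hpos.trans_le h1
    have hVp : 0 < V k := hpos.trans_le h2
    have hTp : 0 < T := hUp.trans_le h3
    have hl := Real.log_le_sub_one_of_pos (x := (U i * V k) / (u i k * T)) (by positivity)
    rw [Real.log_div (by positivity) (by positivity), Real.log_mul hUp.ne' hVp.ne',
      Real.log_mul hpos.ne' hTp.ne'] at hl
    have h4 := mul_le_mul_of_nonneg_left hl hpos.le
    have h5 : u i k * (U i * V k / (u i k * T) - 1) = U i * (V k / T) - u i k := by
      field_simp
    rw [h5] at h4
    nlinarith
  have hs := Finset.sum_le_sum fun i hi => Finset.sum_le_sum fun k hk => key i hi k hk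
  simp only [Finset.sum_add_distrib, Finset.sum_sub_distrib, ← Finset.sum_mul] at hs
  have e1 : ∑ i ∈ I, ∑ k ∈ S, u i k * (-Real.log (V k)) = ∑ k ∈ S, Real.negMulLog (V k) := by
    rw [Finset.sum_comm]
    refine Finset.sum_congr rfl fun k _ => ?_
    rw [← Finset.sum_mul, Real.negMulLog]; simp only [hV]; ring
  have e2 : ∑ i ∈ I, ∑ k ∈ S, U i * (V k / T) ≤ T := by
    simp only [← Finset.mul_sum, ← Finset.sum_mul, ← Finset.sum_div]
    rw [← hT2, ← hT1]
    by_cases h : T = 0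
    · simp [h]
    · rw [div_self h, mul_one]
  rw [e1, ← hT] at hs
  simp only [Finset.sum_sub_distrib]
  have e3 : ∑ i ∈ I, ∑ k ∈ S, Real.negMulLog (u i k) =
    ∑ i ∈ I, ∑ k ∈ S, u i k * (-Real.log (u i k)) := by
    refine Finset.sum_congr rfl fun i _ => Finset.sum_congr rfl fun k _ => ?_
    rw [Real.negMulLog]; ring
  have e4 : ∑ i ∈ I, Real.negMulLog (U i) = - ∑ i ∈ I, (∑ k ∈ S, u i k) * Real.log (U i) := by
    rw [← Finset.sum_neg_distrib]
    refine Finset.sum_congr rfl fun i _ => ?_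
    rw [Real.negMulLog]; simp only [hU]; ring
  have e5 : Real.negMulLog T = - (T * Real.log T) := by rw [Real.negMulLog]; ring
  rw [e3, e4, e5]
  linarith

/-- Entropy (natural logarithm) of the partition into the fibres of `q`. -/
noncomputable def ent {X ι : Type*} [MeasurableSpace X] (μ : Measure X) (q : X → ι) : ℝ :=
  ∑' k, Real.negMulLog (μ.real (q ⁻¹' {k}))

lemma real_zero_of_notMem {X ι : Type*} [MeasurableSpace X] {μ : Measure X} {q : X → ι}
    {S : Finset ι} (hS : ∀ᵐ x ∂μ, q x ∈ S) {k : ι} (hk : k ∉ S) : μ.real (q ⁻¹' {k}) = 0 := by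
  have : μ (q ⁻¹' {k}) = 0 := by
    refine measure_mono_null ?_ (ae_iff.mp hS)
    intro x hx
    simp only [Set.mem_preimage, Set.mem_singleton_iff] at hx
    simpa [hx] using hk
  simp [Measure.real, this]

lemma ent_eq_sum {X ι : Type*} [MeasurableSpace X] {μ : Measure X} {q : X → ι}
    {S : Finset ι} (hS : ∀ᵐ x ∂μ, q x ∈ S) :
    ent μ q = ∑ k ∈ S, Real.negMulLog (μ.real (q ⁻¹' {k})) := by
  unfold ent
  refine tsum_eq_sum fun k hk => ?_
  rw [real_zero_of_notMem hS hk, Real.negMulLog_zero]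

lemma real_marginal {X ι : Type*} [MeasurableSpace X] {μ : Measure X} [IsProbabilityMeasure μ]
    {q : X → ι} (hq : ∀ i, MeasurableSet (q ⁻¹' {i}))
    {S : Finset ι} (hS : ∀ᵐ x ∂μ, q x ∈ S) {A : Set X} (hA : MeasurableSet A) :
    μ.real A = ∑ k ∈ S, μ.real (A ∩ q ⁻¹' {k}) := by
  rw [← measureReal_biUnion_finset]
  · refine measureReal_congr ?_
    filter_upwards [hS] with x hx
    refine propext ⟨fun h => ?_, fun h => ?_⟩
    · exact Set.mem_iUnion₂.mpr ⟨q x, hx, h, rfl⟩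
    · obtain ⟨_, _, h, _⟩ := Set.mem_iUnion₂.mp h
      exact h
  · intro i _ j _ hij
    refine Set.disjoint_left.mpr fun x hx hy => hij ?_
    exact hx.2.symm.trans hy.2
  · exact fun i _ => hA.inter (hq i)

lemma ent_compare {X ι κ : Type*} [MeasurableSpace X] {μ : Measure X} [IsProbabilityMeasure μ]
    {q : X → ι} (hq : ∀ i, MeasurableSet (q ⁻¹' {i}))
    {q' : X → κ} (hq' : ∀ i, MeasurableSet (q' ⁻¹' {i}))
    {S1 : Finset ι} (hS1 : ∀ᵐ x ∂μ, q x ∈ S1) {S2 : Finset κ} (hS2 : ∀ᵐ x ∂μ, q' x ∈ S2)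
    (B : Set X) (hB : ∀ᵐ x ∂μ, x ∈ B) (N : ℝ) (hN : 0 < N)
    (hc : ∀ x0 ∈ B, ∃ S : Finset κ, (S.card : ℝ) ≤ N ∧ ∀ x ∈ B, q x = q x0 → q' x ∈ S) :
    ent μ q' ≤ ent μ q + Real.log N := by
  rw [ent_eq_sum hS1, ent_eq_sum hS2]
  have h1 : ∀ i, μ.real (q ⁻¹' {i}) = ∑ k ∈ S2, μ.real (q ⁻¹' {i} ∩ q' ⁻¹' {k}) :=
    fun i => real_marginal hq' hS2 (hq i)
  have h2 : ∀ k, μ.real (q' ⁻¹' {k}) = ∑ i ∈ S1, μ.real (q ⁻¹' {i} ∩ q' ⁻¹' {k}) := by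
    intro k
    rw [real_marginal hq hS1 (hq' k)]
    simp only [Set.inter_comm]
  simp only [h2]
  simp only [h1]
  refine real_compare S1 S2 _ (fun _ _ => measureReal_nonneg) ?_ N hN ?_
  · simp only [← h1]
    have := real_marginal hq hS1 (μ := μ) MeasurableSet.univ
    simpa using this.symm
  · intro i _
    have hne : ∀ k, μ.real (q ⁻¹' {i} ∩ q' ⁻¹' {k}) ≠ 0 → ∃ x ∈ B, q x = i ∧ q' x = k := by
      intro k hk
      by_contra hcon
      push Not at hcon
      apply hk
      have : μ (q ⁻¹' {i} ∩ q' ⁻¹' {k}) = 0 := by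
        refine measure_mono_null ?_ (ae_iff.mp hB)
        intro x hx hxB
        exact hcon x hxB hx.1 hx.2
      simp [Measure.real, this]
    by_cases hex : ∃ x0 ∈ B, q x0 = i
    · obtain ⟨x0, hx0, hi⟩ := hex
      obtain ⟨S, hS, hS'⟩ := hc x0 hx0
      classical
      rw [← Finset.sum_filter, Finset.sum_const, nsmul_eq_mul, mul_one]
      refine le_trans (Nat.cast_le.mpr (Finset.card_le_card ?_)) hS
      intro k hk
      obtain ⟨x, hx, hxi, hxk⟩ := hne k (Finset.mem_filter.mp hk).2
      rw [← hxk]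
      exact hS' x hx (hxi.trans hi.symm)
    · rw [Finset.sum_eq_zero]
      · exact hN.le
      · intro k _
        rw [if_neg]
        intro h
        obtain ⟨x, hx, hxi, _⟩ := hne k h
        exact hex ⟨x, hx, hxi⟩

lemma card_box {d : ℕ} (y L : Fin d → ℝ) (hL : ∀ j, 0 ≤ L j) :
    ((Fintype.piFinset fun j => Finset.Icc ⌊y j - L j⌋ ⌊y j + L j⌋).card : ℝ) ≤
      ∏ j, (2 * L j + 2) := by
  rw [Fintype.card_piFinset]
  push_cast
  refine Finset.prod_le_prod (fun _ _ => by positivity) fun j _ => ?_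
  rw [Int.card_Icc]
  have h1 := Int.floor_le (y j + L j)
  have h2 := Int.lt_floor_add_one (y j - L j)
  have h3 : ⌊y j - L j⌋ ≤ ⌊y j + L j⌋ := Int.floor_mono (by have := hL j; linarith)
  have h4 : (((⌊y j + L j⌋ + 1 - ⌊y j - L j⌋).toNat : ℤ) : ℝ) =
      ((⌊y j + L j⌋ + 1 - ⌊y j - L j⌋ : ℤ) : ℝ) := by
    rw [Int.toNat_of_nonneg (by omega)]
  rw [Int.cast_natCast] at h4
  rw [h4]; push_cast; linarith

/-- comparison of entropies, target a floor map -/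
lemma ent_compare_floor {X ι : Type*} [MeasurableSpace X] {μ : Measure X} [IsProbabilityMeasure μ]
    {d : ℕ} {q : X → ι} (hq : ∀ i, MeasurableSet (q ⁻¹' {i}))
    {h : Fin d → X → ℝ} {q' : X → Fin d → ℤ} (hq'h : ∀ x j, q' x j = ⌊h j x⌋)
    (hq' : ∀ i, MeasurableSet (q' ⁻¹' {i}))
    {S1 : Finset ι} (hS1 : ∀ᵐ x ∂μ, q x ∈ S1) {S2 : Finset (Fin d → ℤ)}
    (hS2 : ∀ᵐ x ∂μ, q' x ∈ S2)
    (B : Set X) (hB : ∀ᵐ x ∂μ, x ∈ B) (L : Fin d → ℝ) (hL : ∀ j, 0 ≤ L j)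
    (hc : ∀ x ∈ B, ∀ y ∈ B, q x = q y → ∀ j, |h j x - h j y| ≤ L j) :
    ent μ q' ≤ ent μ q + ∑ j, Real.log (2 * L j + 2) := by
  have hp : ∀ j, 0 < 2 * L j + 2 := fun j => by have := hL j; linarith
  rw [← Real.log_prod (fun j _ => (hp j).ne')]
  refine ent_compare hq hq' hS1 hS2 B hB _ (Finset.prod_pos fun j _ => hp j) ?_
  intro x0 hx0
  refine ⟨_, card_box (fun j => h j x0) L hL, ?_⟩
  intro x hx hxq
  rw [Fintype.mem_piFinset]
  intro j
  have := abs_le.mp (hc x hx x0 hx0 hxq j)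
  rw [hq'h, Finset.mem_Icc]
  exact ⟨Int.floor_mono (by linarith), Int.floor_mono (by linarith)⟩

/-- concavity of conditional entropy -/
lemma condent_concave {X ι κ Λ : Type*} [MeasurableSpace X] [Fintype Λ]
    {μ : Measure X} [IsProbabilityMeasure μ]
    (p : Λ → ℝ) (hp0 : ∀ i, 0 < p i) (ν : Λ → Measure X)
    (hν : ∀ i, IsProbabilityMeasure (ν i)) (hμ : μ = ∑ i, ENNReal.ofReal (p i) • ν i)
    {q : X → ι} (hq : ∀ i, MeasurableSet (q ⁻¹' {i}))
    (g : ι → κ) (hg : ∀ i, MeasurableSet ((g ∘ q) ⁻¹' {i}))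
    {S : Finset ι} (hS : ∀ i, ∀ᵐ x ∂(ν i), q x ∈ S) (hSμ : ∀ᵐ x ∂μ, q x ∈ S) :
    ∑ i, p i * (ent (ν i) q - ent (ν i) (g ∘ q)) ≤ ent μ q - ent μ (g ∘ q) := by
  classical
  have hlin : ∀ A : Set X, μ.real A = ∑ i, p i * (ν i).real A := by
    intro A
    rw [hμ]
    simp only [Measure.real, Measure.coe_finsetSum, Finset.sum_apply, Measure.smul_apply,
      smul_eq_mul]
    rw [ENNReal.toReal_sum]
    · refine Finset.sum_congr rfl fun i _ => ?_
      rw [ENNReal.toReal_mul, ENNReal.toReal_ofReal (hp0 i).le]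
    · intro i _
      exact ENNReal.mul_ne_top ENNReal.ofReal_ne_top (measure_ne_top _ _)
  have hgS : ∀ {θ : Measure X}, (∀ᵐ x ∂θ, q x ∈ S) → ∀ᵐ x ∂θ, (g ∘ q) x ∈ S.image g :=
    fun h => h.mono fun x hx => Finset.mem_image_of_mem g hx
  have hcell : ∀ {θ : Measure X} [IsProbabilityMeasure θ], (∀ᵐ x ∂θ, q x ∈ S) → ∀ e,
      θ.real ((g ∘ q) ⁻¹' {e}) = ∑ k ∈ S with g k = e, θ.real (q ⁻¹' {k}) := by
    intro θ _ h e
    rw [real_marginal hq h (hg e), Finset.sum_filter]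
    refine Finset.sum_congr rfl fun k _ => ?_
    split_ifs with hk
    · congr 1
      ext x
      simp only [Set.mem_inter_iff, Set.mem_preimage, Set.mem_singleton_iff, Function.comp]
      constructor
      · exact fun h => h.2
      · intro h; exact ⟨by rw [h, hk], h⟩
    · have : (g ∘ q) ⁻¹' {e} ∩ q ⁻¹' {k} = ∅ := by
        ext x
        simp only [Set.mem_inter_iff, Set.mem_preimage, Set.mem_singleton_iff, Function.comp,
          Set.mem_empty_iff_false, iff_false, not_and]
        intro h1 h2; rw [h2] at h1; exact hk h1
      rw [this]; simp
  have hF : ∀ {θ : Measure X} [IsProbabilityMeasure θ], (∀ᵐ x ∂θ, q x ∈ S) →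
      ent θ q - ent θ (g ∘ q) = ∑ e ∈ S.image g,
        (∑ k ∈ S with g k = e, Real.negMulLog (θ.real (q ⁻¹' {k})) -
          Real.negMulLog (∑ k ∈ S with g k = e, θ.real (q ⁻¹' {k}))) := by
    intro θ _ h
    rw [ent_eq_sum h, ent_eq_sum (hgS h), Finset.sum_sub_distrib]
    congr 1
    · exact (Finset.sum_fiberwise_of_maps_to (fun k hk => Finset.mem_image_of_mem g hk) _).symm
    · exact Finset.sum_congr rfl fun e _ => by rw [hcell h e]
  rw [hF hSμ]
  simp only [hF (hS _)]
  simp only [Finset.mul_sum]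
  rw [Finset.sum_comm]
  refine Finset.sum_le_sum fun e _ => ?_
  have h := real_concave (Finset.univ : Finset Λ) (S.filter fun k => g k = e)
    (fun i k => p i * (ν i).real (q ⁻¹' {k}))
    (fun i k => mul_nonneg (hp0 i).le measureReal_nonneg)
  have e1 : ∑ i, ∑ k ∈ S with g k = e, p i * (ν i).real (q ⁻¹' {k}) =
      ∑ k ∈ S with g k = e, μ.real (q ⁻¹' {k}) := by
    rw [Finset.sum_comm]
    exact Finset.sum_congr rfl fun k _ => (hlin _).symm
  rw [e1] at h
  simp only [← hlin] at h
  refine le_trans (le_of_eq ?_) h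
  refine Finset.sum_congr rfl fun i _ => ?_
  rw [← Finset.mul_sum, Real.negMulLog_mul]
  simp only [Real.negMulLog_mul, Finset.sum_add_distrib, ← Finset.mul_sum, ← Finset.sum_mul]
  ring

open Filter Topology in
lemma scale_tendsto {D : ℝ} {F : ℝ → ℝ}
    (h : Tendsto (fun δ : ℝ => Real.log (F δ) / Real.log δ) (nhdsWithin 0 (Set.Ioi 0)) (nhds D)) :
    Tendsto (fun m : ℕ => -Real.log (F ((2:ℝ)⁻¹ ^ m)) / m) atTop (nhds (D * Real.log 2)) := by
  have h1 : Tendsto (fun m : ℕ => (2:ℝ)⁻¹ ^ m) atTop (nhdsWithin 0 (Set.Ioi 0)) := by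
    refine tendsto_nhdsWithin_iff.mpr ⟨tendsto_pow_atTop_nhds_zero_of_lt_one (by norm_num)
      (by norm_num), Eventually.of_forall fun m => ?_⟩
    exact pow_pos (by norm_num : (0:ℝ) < 2⁻¹) m
  have h2 := (h.comp h1).mul_const (Real.log 2)
  refine h2.congr' ?_
  filter_upwards [eventually_ge_atTop 1] with m hm
  simp only [Function.comp]
  rw [Real.log_pow, Real.log_inv]
  have : (m:ℝ) ≠ 0 := by positivity
  have hl : Real.log 2 ≠ 0 := (Real.log_pos (by norm_num)).ne'
  field_simp

lemma integral_fin {X ι : Type*} [MeasurableSpace X] {μ : Measure X} [IsProbabilityMeasure μ]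
    {q : X → ι} (hq : ∀ i, MeasurableSet (q ⁻¹' {i}))
    {S : Finset ι} (hS : ∀ᵐ x ∂μ, q x ∈ S) (f : ι → ℝ) :
    Integrable (fun x => f (q x)) μ ∧
      ∫ x, f (q x) ∂μ = ∑ k ∈ S, μ.real (q ⁻¹' {k}) * f k := by
  classical
  have hae : (fun x => ∑ k ∈ S, (q ⁻¹' {k}).indicator (fun _ => f k) x) =ᵐ[μ]
      fun x => f (q x) := by
    filter_upwards [hS] with x hx
    rw [Finset.sum_eq_single (q x)]
    · simp
    · intro k _ hk
      rw [Set.indicator_of_notMem]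
      simpa using fun h => hk h.symm
    · intro h; exact absurd hx h
  have hint : ∀ k ∈ S, Integrable ((q ⁻¹' {k}).indicator (fun _ => f k)) μ := fun k _ =>
    (integrable_const _).indicator (hq k)
  refine ⟨(integrable_finsetSum S hint).congr hae, ?_⟩
  rw [← integral_congr_ae hae, integral_finsetSum S hint]
  refine Finset.sum_congr rfl fun k _ => ?_
  rw [integral_indicator_const _ (hq k), smul_eq_mul]

lemma ae_cell_pos {X ι : Type*} [MeasurableSpace X] {μ : Measure X} [IsProbabilityMeasure μ]
    {q : X → ι} {S : Finset ι} (hS : ∀ᵐ x ∂μ, q x ∈ S) :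
    ∀ᵐ x ∂μ, 0 < μ.real (q ⁻¹' {q x}) := by
  have h : ∀ᵐ x ∂μ, ∀ k ∈ S, μ.real (q ⁻¹' {k}) = 0 → q x ≠ k := by
    refine (Finset.eventually_all S).mpr fun k _ => ?_
    by_cases hk : μ.real (q ⁻¹' {k}) = 0
    · have : μ (q ⁻¹' {k}) = 0 := (measureReal_eq_zero_iff).mp hk
      have h2 := measure_eq_zero_iff_ae_notMem.mp this
      filter_upwards [h2] with x hx _ h
      exact hx h
    · exact Filter.Eventually.of_forall fun x h => absurd h hk
  filter_upwards [hS, h] with x hx h1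
  rcases (measureReal_nonneg (μ := μ) (s := q ⁻¹' {q x})).eq_or_lt with h2 | h2
  · exact absurd rfl (h1 _ hx h2.symm)
  · exact h2

open Filter Topology in
lemma lower_dim {X Y ι : Type*} [MeasurableSpace X] [PseudoMetricSpace Y] [MeasurableSpace Y]
    [OpensMeasurableSpace Y] {μ : Measure X} [IsProbabilityMeasure μ] (π : X → Y)
    (hπ : Measurable π) (q : ℕ → X → ι) (hq : ∀ m i, MeasurableSet (q m ⁻¹' {i}))
    (S : ℕ → Finset ι) (hS : ∀ m, ∀ᵐ x ∂μ, q m x ∈ S m)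
    (hdist : ∀ m x y, q m y = q m x → dist (π y) (π x) ≤ (2:ℝ)⁻¹ ^ m) (D : ℝ)
    (hdim : ∀ᵐ x ∂μ, Tendsto (fun δ : ℝ =>
      Real.log ((Measure.map π μ (Metric.closedBall (π x) δ)).toReal) / Real.log δ)
      (nhdsWithin 0 (Set.Ioi 0)) (nhds D)) :
    ∃ e : ℕ → ℝ, Tendsto e atTop (nhds 0) ∧
      ∀ m : ℕ, m * (D * Real.log 2 - e m) ≤ ent μ (q m) := by
  set f : ℕ → ι → ℝ := fun m k => -Real.log (μ.real (q m ⁻¹' {k})) / m with hf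
  have hf0 : ∀ m k, 0 ≤ f m k := fun m k => div_nonneg (neg_nonneg.mpr
    (Real.log_nonpos measureReal_nonneg measureReal_le_one)) (by positivity)
  set c := D * Real.log 2 with hc
  refine ⟨fun m => ∫ x, max (c - f m (q m x)) 0 ∂μ, ?_, ?_⟩
  · have : Tendsto (fun m => ∫ x, max (c - f m (q m x)) 0 ∂μ) atTop
        (nhds (∫ x, (0:ℝ) ∂μ)) := by
      refine tendsto_integral_of_dominated_convergence (fun _ => |c|) ?_ (integrable_const _) ?_ ?_
      · intro m
        exact (integral_fin (hq m) (hS m) (fun k => max (c - f m k) 0)).1.aestronglyMeasurable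
      · intro m
        refine Eventually.of_forall fun x => ?_
        rw [Real.norm_eq_abs, abs_of_nonneg (le_max_right _ _)]
        refine max_le ?_ (abs_nonneg _)
        have := hf0 m (q m x); have := le_abs_self c; linarith
      · have hpos : ∀ᵐ x ∂μ, ∀ m, 0 < μ.real (q m ⁻¹' {q m x}) :=
          ae_all_iff.mpr fun m => ae_cell_pos (hS m)
        filter_upwards [hdim, hpos] with x hx hxp
        have h1 := scale_tendsto hx
        have h2 : Tendsto (fun m : ℕ => max (c - (-Real.log ((Measure.map π μ
            (Metric.closedBall (π x) ((2:ℝ)⁻¹ ^ m))).toReal) / m)) 0) atTop (nhds 0) := by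
          have := (tendsto_const_nhds (x := c) |>.sub h1).max (tendsto_const_nhds (x := (0:ℝ)))
          rwa [← hc, sub_self, max_self] at this
        refine squeeze_zero (fun m => le_max_right _ _) (fun m => ?_) h2
        refine max_le_max ?_ le_rfl
        refine sub_le_sub_left ?_ _
        refine div_le_div_of_nonneg_right ?_ (by positivity)
        refine neg_le_neg (Real.log_le_log (hxp m) ?_)
        rw [Measure.map_apply hπ Metric.isClosed_closedBall.measurableSet]
        refine ENNReal.toReal_mono (measure_ne_top _ _) (measure_mono ?_)
        intro y hy
        exact hdist m x y hy
    simpa using this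
  · intro m
    rcases Nat.eq_zero_or_pos m with h0 | hm
    · subst h0
      simp only [Nat.cast_zero, zero_mul]
      exact tsum_nonneg fun k => Real.negMulLog_nonneg measureReal_nonneg measureReal_le_one
    have hm' : (0:ℝ) < m := by exact_mod_cast hm
    have h1 := integral_fin (hq m) (hS m) (f m)
    have h2 := integral_fin (hq m) (hS m) (fun k => max (c - f m k) 0)
    have h3 : ent μ (q m) = m * ∫ x, f m (q m x) ∂μ := by
      rw [h1.2, ent_eq_sum (hS m), Finset.mul_sum]
      refine Finset.sum_congr rfl fun k _ => ?_
      simp only [hf, Real.negMulLog]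
      field_simp
    rw [h3]
    refine mul_le_mul_of_nonneg_left ?_ hm'.le
    have h4 : ∫ x, c ∂μ ≤ ∫ x, (f m (q m x) + max (c - f m (q m x)) 0) ∂μ := by
      refine integral_mono (integrable_const _) (h1.1.add h2.1) fun x => ?_
      have := le_max_left (c - f m (q m x)) 0
      show c ≤ _
      linarith
    rw [integral_add h1.1 h2.1] at h4
    simp only [integral_const, probReal_univ, one_smul] at h4
    linarith

lemma gibbs {ι : Type*} (S : Finset ι) (P w : ι → ℝ) (hP : ∀ k, 0 ≤ P k) (hw : ∀ k, 0 < w k) :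
    ∑ k ∈ S, Real.negMulLog (P k) ≤ ∑ k ∈ S, P k * (-Real.log (w k)) + ∑ k ∈ S, w k := by
  rw [← Finset.sum_add_distrib]
  refine Finset.sum_le_sum fun k _ => ?_
  rcases (hP k).eq_or_lt with h | h
  · rw [← h]; simp [(hw k).le]
  have hl := Real.log_le_sub_one_of_pos (x := w k / P k) (div_pos (hw k) h)
  rw [Real.log_div (hw k).ne' h.ne'] at hl
  have h2 := mul_le_mul_of_nonneg_left hl h.le
  have h3 : P k * (w k / P k - 1) = w k - P k := by field_simp
  rw [h3] at h2
  rw [Real.negMulLog]; nlinarith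

/-- grid at dyadic scale `2^m` -/
noncomputable def dgrid (d : ℕ) (m : ℕ) (x : Fin d → ℝ) : Fin d → ℤ := fun j => ⌊(2:ℝ) ^ m * x j⌋

lemma floor_meas {X : Type*} [MeasurableSpace X] {d : ℕ} {q : X → Fin d → ℤ} {h : Fin d → X → ℝ}
    (hq : ∀ x j, q x j = ⌊h j x⌋) (hm : ∀ j, Measurable (h j)) (k : Fin d → ℤ) :
    MeasurableSet (q ⁻¹' {k}) := by
  have : Measurable q := by
    refine measurable_pi_lambda _ fun j => ?_
    simp only [hq]
    exact Int.measurable_floor.comp (hm j)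
  exact this (measurableSet_singleton k)

lemma floor_near {m : ℕ} {x y : ℝ} (h : |y - x| ≤ (2:ℝ)⁻¹ ^ m) :
    |⌊(2:ℝ) ^ m * y⌋ - ⌊(2:ℝ) ^ m * x⌋| ≤ 1 := by
  have hp : (0:ℝ) < 2 ^ m := by positivity
  have h1 : |2 ^ m * y - 2 ^ m * x| ≤ 1 := by
    rw [← mul_sub, abs_mul, abs_of_pos hp]
    calc _ ≤ (2:ℝ) ^ m * (2:ℝ)⁻¹ ^ m := mul_le_mul_of_nonneg_left h hp.le
      _ = 1 := by rw [← mul_pow]; norm_num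
  obtain ⟨h2, h3⟩ := abs_le.mp h1
  have h4 : ⌊(2:ℝ) ^ m * y⌋ ≤ ⌊(2:ℝ) ^ m * x⌋ + 1 := by
    rw [← Int.floor_add_one]; exact Int.floor_mono (by linarith)
  have h5 : ⌊(2:ℝ) ^ m * x⌋ ≤ ⌊(2:ℝ) ^ m * y⌋ + 1 := by
    rw [← Int.floor_add_one]; exact Int.floor_mono (by linarith)
  rw [abs_le]; constructor <;> omega

open Filter Topology in
lemma upper_dim {d : ℕ} {μ : Measure (Fin d → ℝ)} [IsProbabilityMeasure μ]
    (S : ℕ → Finset (Fin d → ℤ)) (hS : ∀ m, ∀ᵐ x ∂μ, dgrid d m x ∈ S m) (C : ℝ)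
    (hC : ∀ m : ℕ, 1 ≤ m → Real.log ((S m).card) ≤ C * m) (D : ℝ)
    (hdim : ∀ᵐ x ∂μ, Tendsto (fun δ : ℝ =>
      Real.log ((μ (Metric.closedBall x δ)).toReal) / Real.log δ)
      (nhdsWithin 0 (Set.Ioi 0)) (nhds D)) :
    ∃ e : ℕ → ℝ, Tendsto e atTop (nhds 0) ∧
      ∀ m : ℕ, 1 ≤ m → ent μ (dgrid d m) ≤ m * (D * Real.log 2 + e m) + (3 ^ d + 1) := by
  classical
  have hq : ∀ m i, MeasurableSet (dgrid d m ⁻¹' {i}) := fun m i =>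
    floor_meas (h := fun j (x : Fin d → ℝ) => (2:ℝ) ^ m * x j) (fun _ _ => rfl)
      (fun j => (measurable_pi_apply j).const_mul _) i
  have hcard : ∀ m, 0 < ((S m).card : ℝ) := by
    intro m
    obtain ⟨x, hx⟩ := (hS m).exists
    exact_mod_cast Finset.card_pos.mpr ⟨_, hx⟩
  have hcard1 : ∀ m, (1:ℝ) ≤ (S m).card := fun m => by
    have := hcard m
    norm_cast at this ⊢
  set NS : ℕ → (Fin d → ℤ) → Set (Fin d → ℝ) := fun m k => {y | ∀ j, |dgrid d m y j - k j| ≤ 1}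
    with hNS
  have hNSm : ∀ m k, MeasurableSet (NS m k) := by
    intro m k
    have hmeas : Measurable (dgrid d m) := by
      refine measurable_pi_lambda _ fun j => ?_
      exact Int.measurable_floor.comp ((measurable_pi_apply j).const_mul _)
    have : NS m k = dgrid d m ⁻¹' {l | ∀ j, |l j - k j| ≤ 1} := rfl
    rw [this]
    exact hmeas (Set.to_countable _).measurableSet
  set w : ℕ → (Fin d → ℤ) → ℝ := fun m k => max (μ.real (NS m k)) (1 / (S m).card) with hw
  have hw0 : ∀ m k, 0 < w m k := fun m k => lt_max_of_lt_right (by have := hcard m; positivity)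
  have hw1 : ∀ m k, w m k ≤ 1 := fun m k => max_le measureReal_le_one
    (by rw [div_le_one (hcard m)]; exact hcard1 m)
  have hsumw : ∀ m, ∑ k ∈ S m, w m k ≤ 3 ^ d + 1 := by
    intro m
    have h1 : ∀ k, w m k ≤ μ.real (NS m k) + 1 / (S m).card := fun k =>
      max_le_add_of_nonneg measureReal_nonneg (by have := hcard m; positivity)
    refine le_trans (Finset.sum_le_sum fun k _ => h1 k) ?_
    rw [Finset.sum_add_distrib, Finset.sum_const, nsmul_eq_mul, mul_one_div_cancel (hcard m).ne']
    gcongr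
    have h2 : ∀ k, μ.real (NS m k) = ∑ l ∈ S m, if (∀ j, |l j - k j| ≤ 1) then
        μ.real (dgrid d m ⁻¹' {l}) else 0 := by
      intro k
      rw [real_marginal (hq m) (hS m) (hNSm m k)]
      refine Finset.sum_congr rfl fun l _ => ?_
      split_ifs with hl
      · congr 1
        ext x
        simp only [hNS, Set.mem_inter_iff, Set.mem_ofPred_eq, Set.mem_preimage,
          Set.mem_singleton_iff]
        refine ⟨fun h => h.2, fun h => ⟨?_, h⟩⟩
        rw [h]; exact hl
      · have : NS m k ∩ dgrid d m ⁻¹' {l} = ∅ := by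
          ext x
          simp only [hNS, Set.mem_inter_iff, Set.mem_ofPred_eq, Set.mem_preimage,
            Set.mem_singleton_iff, Set.mem_empty_iff_false, iff_false, not_and]
          intro h1 h2; rw [h2] at h1; exact hl h1
        rw [this]; simp
    simp only [h2]
    rw [Finset.sum_comm]
    have h3 : ∀ l ∈ S m, (∑ k ∈ S m, if (∀ j, |l j - k j| ≤ 1) then
        μ.real (dgrid d m ⁻¹' {l}) else 0) ≤ 3 ^ d * μ.real (dgrid d m ⁻¹' {l}) := by
      intro l _
      rw [← Finset.sum_filter, Finset.sum_const, nsmul_eq_mul]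
      refine mul_le_mul_of_nonneg_right ?_ measureReal_nonneg
      have h4 : (S m).filter (fun k => ∀ j, |l j - k j| ≤ 1) ⊆
          Fintype.piFinset fun j => Finset.Icc (l j - 1) (l j + 1) := by
        intro k hk
        rw [Fintype.mem_piFinset]
        intro j
        have := abs_le.mp ((Finset.mem_filter.mp hk).2 j)
        rw [Finset.mem_Icc]; constructor <;> omega
      have h5 := Finset.card_le_card h4
      rw [Fintype.card_piFinset] at h5
      simp only [Int.card_Icc] at h5
      have h6 : ∀ j, (l j + 1 + 1 - (l j - 1)).toNat = 3 := fun j => by omega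
      simp only [h6, Finset.prod_const, Finset.card_univ, Fintype.card_fin] at h5
      exact_mod_cast h5
    refine le_trans (Finset.sum_le_sum h3) ?_
    rw [← Finset.mul_sum]
    have := real_marginal (hq m) (hS m) (μ := μ) MeasurableSet.univ
    simp only [probReal_univ, Set.univ_inter] at this
    rw [← this, mul_one]
  set f : ℕ → (Fin d → ℤ) → ℝ := fun m k => -Real.log (w m k) / m with hf
  have hf0 : ∀ m k, 0 ≤ f m k := fun m k => div_nonneg (neg_nonneg.mpr
    (Real.log_nonpos (hw0 m k).le (hw1 m k))) (by positivity)
  have hfC : ∀ m k, f m k ≤ |C| := by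
    intro m k
    rcases Nat.eq_zero_or_pos m with h0 | hm
    · subst h0; simp [hf]
    have hm' : (0:ℝ) < m := by exact_mod_cast hm
    simp only [hf]
    rw [div_le_iff₀ hm']
    have h1 : Real.log (1 / (S m).card) ≤ Real.log (w m k) :=
      Real.log_le_log (by have := hcard m; positivity) (le_max_right _ _)
    rw [one_div, Real.log_inv] at h1
    have := hC m hm
    have h2 := mul_le_mul_of_nonneg_right (le_abs_self C) hm'.le
    linarith
  set c := D * Real.log 2 with hc
  refine ⟨fun m => ∫ x, max (f m (dgrid d m x) - c) 0 ∂μ, ?_, ?_⟩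
  · have : Tendsto (fun m => ∫ x, max (f m (dgrid d m x) - c) 0 ∂μ) atTop
        (nhds (∫ x, (0:ℝ) ∂μ)) := by
      refine tendsto_integral_of_dominated_convergence (fun _ => |C| + |c|) ?_
        (integrable_const _) ?_ ?_
      · intro m
        exact (integral_fin (hq m) (hS m) (fun k => max (f m k - c) 0)).1.aestronglyMeasurable
      · intro m
        refine Eventually.of_forall fun x => ?_
        rw [Real.norm_eq_abs, abs_of_nonneg (le_max_right _ _)]
        refine max_le ?_ (by positivity)
        have := hfC m (dgrid d m x); have := neg_abs_le c; linarith
      · have hpos : ∀ᵐ x ∂μ, ∀ m, 0 < μ.real (dgrid d m ⁻¹' {dgrid d m x}) :=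
          ae_all_iff.mpr fun m => ae_cell_pos (hS m)
        filter_upwards [hdim, hpos] with x hx hxp
        have h1 := scale_tendsto hx
        have h2 : Tendsto (fun m : ℕ => max ((-Real.log ((μ
            (Metric.closedBall x ((2:ℝ)⁻¹ ^ m))).toReal) / m) - c) 0) atTop (nhds 0) := by
          have := (h1.sub (tendsto_const_nhds (x := c))).max (tendsto_const_nhds (x := (0:ℝ)))
          rwa [← hc, sub_self, max_self] at this
        refine squeeze_zero (fun m => le_max_right _ _) (fun m => ?_) h2
        refine max_le_max ?_ le_rfl
        refine sub_le_sub_right ?_ _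
        refine div_le_div_of_nonneg_right ?_ (by positivity)
        refine neg_le_neg (Real.log_le_log ?_ ?_)
        · refine (hxp m).trans_le (measureReal_mono ?_)
          intro y hy
          rw [Metric.mem_closedBall, dist_pi_le_iff (by positivity)]
          intro j
          have hj : ⌊(2:ℝ) ^ m * y j⌋ = ⌊(2:ℝ) ^ m * x j⌋ := congrFun hy j
          have h3 := Int.abs_sub_lt_one_of_floor_eq_floor hj
          have hp : (0:ℝ) < 2 ^ m := by positivity
          rw [← mul_sub, abs_mul, abs_of_pos hp] at h3
          rw [Real.dist_eq, inv_pow, ← one_div, le_div_iff₀ hp]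
          linarith
        · refine le_trans (measureReal_mono ?_) (le_max_left _ _)
          intro y hy j
          rw [Metric.mem_closedBall, dist_pi_le_iff (by positivity)] at hy
          have := hy j
          rw [Real.dist_eq] at this
          exact floor_near this
    simpa using this
  · intro m hm
    have hm' : (0:ℝ) < m := by exact_mod_cast hm
    have h1 := integral_fin (hq m) (hS m) (f m)
    have h2 := integral_fin (hq m) (hS m) (fun k => max (f m k - c) 0)
    have h3 : ent μ (dgrid d m) ≤ m * ∫ x, f m (dgrid d m x) ∂μ + (3 ^ d + 1) := by
      rw [h1.2, ent_eq_sum (hS m), Finset.mul_sum]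
      refine (gibbs (S m) _ (w m) (fun _ => measureReal_nonneg) (hw0 m)).trans ?_
      refine add_le_add (le_of_eq ?_) (hsumw m)
      refine Finset.sum_congr rfl fun k _ => ?_
      simp only [hf]
      field_simp
    refine h3.trans (add_le_add (mul_le_mul_of_nonneg_left ?_ hm'.le) le_rfl)
    have h4 : ∫ x, f m (dgrid d m x) ∂μ ≤ ∫ x, (c + max (f m (dgrid d m x) - c) 0) ∂μ := by
      refine integral_mono h1.1 ((integrable_const _).add h2.1) fun x => ?_
      have := le_max_left (f m (dgrid d m x) - c) 0
      show f m (dgrid d m x) ≤ _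
      linarith
    rw [integral_add (integrable_const _) h2.1] at h4
    simp only [integral_const, probReal_univ, one_smul] at h4
    linarith

noncomputable def lgrid (d : ℕ) (l : Fin d → ℕ) (x : Fin d → ℝ) : Fin d → ℤ :=
  fun j => ⌊(2:ℝ) ^ (l j) * x j⌋

lemma lgrid_comp {d m : ℕ} {l : Fin d → ℕ} (hl : ∀ j, l j ≤ m) :
    lgrid d l = (fun (k : Fin d → ℤ) j => k j / ((2 ^ (m - l j) : ℕ) : ℤ)) ∘ dgrid d m := by
  funext x j
  simp only [lgrid, dgrid, Function.comp]
  rw [← Int.floor_div_natCast]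
  congr 1
  rw [eq_div_iff (by positivity)]
  push_cast
  have : (2:ℝ) ^ m = 2 ^ (l j) * 2 ^ (m - l j) := by rw [← pow_add]; congr 1; have := hl j; omega
  rw [this]; ring

/-- diagonal affine maps -/
def aff {d : ℕ} (ρ b : Fin d → ℝ) (x : Fin d → ℝ) : Fin d → ℝ := fun j => ρ j * x j + b j

lemma aff_meas {d : ℕ} (ρ b : Fin d → ℝ) : Measurable (aff ρ b) :=
  measurable_pi_lambda _ fun j => ((measurable_pi_apply j).const_mul _).add_const _

def cbox (d : ℕ) (R : ℝ) : Set (Fin d → ℝ) := {x | ∀ j, |x j| ≤ R}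

lemma cbox_meas (d : ℕ) (R : ℝ) : MeasurableSet (cbox d R) := by
  have : cbox d R = ⋂ j, {x | |x j| ≤ R} := by ext; simp [cbox]
  rw [this]
  exact MeasurableSet.iInter fun j =>
    measurableSet_le (continuous_abs.measurable.comp (measurable_pi_apply j)) measurable_const

lemma floor_mem {X : Type*} {d : ℕ} {q : X → Fin d → ℤ} {h : Fin d → X → ℝ}
    (hq : ∀ x j, q x j = ⌊h j x⌋) (K : Fin d → ℝ) {x : X} (hx : ∀ j, |h j x| ≤ K j) :
    q x ∈ Fintype.piFinset fun j => Finset.Icc ⌊(0:ℝ) - K j⌋ ⌊0 + K j⌋ := by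
  rw [Fintype.mem_piFinset]
  intro j
  have := abs_le.mp (hx j)
  rw [hq, Finset.mem_Icc]
  exact ⟨Int.floor_mono (by linarith), Int.floor_mono (by linarith)⟩

lemma ent_map {X Y ι : Type*} [MeasurableSpace X] [MeasurableSpace Y] (μ : Measure X)
    {f : X → Y} (hf : Measurable f) {q : Y → ι} (hq : ∀ i, MeasurableSet (q ⁻¹' {i})) :
    ent (Measure.map f μ) q = ent μ (q ∘ f) := by
  unfold ent
  refine tsum_congr fun k => ?_
  rw [map_measureReal_apply hf (hq k)]; rfl

lemma lgrid_meas (d : ℕ) (l : Fin d → ℕ) (i : Fin d → ℤ) : MeasurableSet (lgrid d l ⁻¹' {i}) :=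
  floor_meas (h := fun j (x : Fin d → ℝ) => (2:ℝ) ^ (l j) * x j) (fun _ _ => rfl)
      (fun j => (measurable_pi_apply j).const_mul _) i

lemma dgrid_meas (d m : ℕ) (i : Fin d → ℤ) : MeasurableSet (dgrid d m ⁻¹' {i}) :=
  lgrid_meas d (fun _ => m) i

lemma map_aff_decomp {Λ : Type*} [Fintype Λ] {d : ℕ} (r a : Λ → Fin d → ℝ) (p : Λ → ℝ)
    (μ : Measure (Fin d → ℝ))
    (hμsa : μ = ∑ i : Λ, ENNReal.ofReal (p i) • Measure.map (aff (r i) (a i)) μ)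
    (ρ b : Fin d → ℝ) :
    Measure.map (aff ρ b) μ = ∑ i : Λ, ENNReal.ofReal (p i) •
      Measure.map (aff (fun j => ρ j * r i j) (fun j => ρ j * a i j + b j)) μ := by
  ext A hA
  have h := congrArg (fun θ : Measure (Fin d → ℝ) => θ (aff ρ b ⁻¹' A)) hμsa
  simp only [Measure.coe_finsetSum, Finset.sum_apply, Measure.smul_apply] at h ⊢
  rw [Measure.map_apply (aff_meas _ _) hA, h]
  refine Finset.sum_congr rfl fun i _ => ?_
  rw [Measure.map_apply (aff_meas _ _) hA, Measure.map_apply (aff_meas _ _) (aff_meas _ _ hA),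
    ← Set.preimage_comp]
  congr 3
  funext x j
  simp only [aff, Function.comp]; ring

lemma descent {Λ : Type*} [Fintype Λ] {d : ℕ} (r a : Λ → Fin d → ℝ) (p : Λ → ℝ)
    (hp0 : ∀ i, 0 < p i) (hp1 : ∑ i, p i = 1)
    (μ : Measure (Fin d → ℝ)) [IsProbabilityMeasure μ]
    (hμsa : μ = ∑ i : Λ, ENNReal.ofReal (p i) • Measure.map (aff (r i) (a i)) μ)
    (χ : Fin d → ℝ) (t : Λ → ℝ) (δ T : ℝ) (htδ : ∀ i, δ ≤ t i) (htT : ∀ i, t i ≤ T)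
    (htr : ∀ i j, |r i j| = (2:ℝ) ^ (-(t i * χ j)))
    (R : ℝ) (hR : ∀ᵐ x ∂μ, x ∈ cbox d R) (hinv : ∀ i, ∀ x ∈ cbox d R, aff (r i) (a i) x ∈ cbox d R)
    (m : ℕ) (l : Fin d → ℕ) (hl : ∀ j, l j ≤ m) (n c : ℝ)
    (hbase : ∀ (ρ b : Fin d → ℝ) (s : ℝ), (∀ j, |ρ j| = (2:ℝ) ^ (-(s * χ j))) → n ≤ s →
      s ≤ n + T → (∀ x ∈ cbox d R, aff ρ b x ∈ cbox d R) →
      c ≤ ent (Measure.map (aff ρ b) μ) (dgrid d m) - ent (Measure.map (aff ρ b) μ) (lgrid d l)) :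
    ∀ (N : ℕ) (ρ b : Fin d → ℝ) (s : ℝ), (∀ j, |ρ j| = (2:ℝ) ^ (-(s * χ j))) → n - s ≤ N * δ →
      s ≤ n + T → (∀ x ∈ cbox d R, aff ρ b x ∈ cbox d R) →
      c ≤ ent (Measure.map (aff ρ b) μ) (dgrid d m) -
        ent (Measure.map (aff ρ b) μ) (lgrid d l) := by
  intro N
  induction N with
  | zero =>
    intro ρ b s h1 h2 h3 h4
    exact hbase ρ b s h1 (by simp at h2; linarith) h3 h4
  | succ N ih =>
    intro ρ b s h1 h2 h3 h4
    by_cases hns : n ≤ s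
    · exact hbase ρ b s h1 hns h3 h4
    push Not at hns
    have hstep : ∀ i, c ≤ ent (Measure.map (aff (fun j => ρ j * r i j)
        (fun j => ρ j * a i j + b j)) μ) (dgrid d m) -
        ent (Measure.map (aff (fun j => ρ j * r i j) (fun j => ρ j * a i j + b j)) μ)
          (lgrid d l) := by
      intro i
      refine ih _ _ (s + t i) ?_ ?_ ?_ ?_
      · intro j
        rw [abs_mul, h1, htr, ← Real.rpow_add (by norm_num)]
        congr 1; ring
      · push_cast at h2
        have := htδ i; linarith
      · have := htT i; linarith
      · intro x hx
        have := h4 _ (hinv i x hx)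
        have e : aff (fun j => ρ j * r i j) (fun j => ρ j * a i j + b j) x =
          aff ρ b (aff (r i) (a i) x) := by funext j; simp only [aff]; ring
        rw [e]; exact this
    have hprob : ∀ ρ b : Fin d → ℝ, IsProbabilityMeasure (Measure.map (aff ρ b) μ) := fun ρ b =>
      Measure.isProbabilityMeasure_map (aff_meas ρ b).aemeasurable
    have hbox : ∀ ρ b : Fin d → ℝ, (∀ x ∈ cbox d R, aff ρ b x ∈ cbox d R) →
        ∀ᵐ x ∂(Measure.map (aff ρ b) μ), dgrid d m x ∈
          Fintype.piFinset fun j => Finset.Icc ⌊(0:ℝ) - 2 ^ m * R⌋ ⌊0 + 2 ^ m * R⌋ := by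
      intro ρ b hb
      have h5 : ∀ᵐ x ∂(Measure.map (aff ρ b) μ), x ∈ cbox d R := by
        refine (ae_map_iff (p := fun x => x ∈ cbox d R) (aff_meas ρ b).aemeasurable
          (cbox_meas d R)).mpr ?_
        exact hR.mono fun x hx => hb x hx
      refine h5.mono fun x hx => ?_
      refine floor_mem (h := fun j (x : Fin d → ℝ) => (2:ℝ) ^ m * x j) (fun _ _ => rfl)
        (fun _ => 2 ^ m * R) fun j => ?_
      rw [abs_mul, abs_of_pos (by positivity : (0:ℝ) < 2 ^ m)]
      exact mul_le_mul_of_nonneg_left (hx j) (by positivity)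
    have h5 := condent_concave p hp0
      (fun i => Measure.map (aff (fun j => ρ j * r i j) (fun j => ρ j * a i j + b j)) μ)
      (fun i => hprob _ _) (map_aff_decomp r a p μ hμsa ρ b) (dgrid_meas d m)
      (fun (k : Fin d → ℤ) j => k j / ((2 ^ (m - l j) : ℕ) : ℤ))
      (by rw [← lgrid_comp hl]; exact lgrid_meas d l)
      (fun i => hbox _ _ (by
        intro x hx
        have := h4 _ (hinv i x hx)
        have e : aff (fun j => ρ j * r i j) (fun j => ρ j * a i j + b j) x =
          aff ρ b (aff (r i) (a i) x) := by funext j; simp only [aff]; ring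
        rw [e]; exact this)) (hbox ρ b h4)
    rw [← lgrid_comp hl] at h5
    refine le_trans ?_ h5
    calc c = ∑ i, p i * c := by rw [← Finset.sum_mul, hp1, one_mul]
      _ ≤ _ := Finset.sum_le_sum fun i _ => mul_le_mul_of_nonneg_left (hstep i) (hp0 i).le

open Filter Topology in
lemma exists_box {Λ : Type*} [Fintype Λ] [Nonempty Λ] {d : ℕ} (hd : 1 ≤ d)
    (r a : Λ → Fin d → ℝ) (hr : ∀ i j, |r i j| < 1) (p : Λ → ℝ)
    (hp0 : ∀ i, 0 < p i) (hp1 : ∑ i, p i = 1)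
    (μ : Measure (Fin d → ℝ)) [IsProbabilityMeasure μ]
    (hμsa : μ = ∑ i : Λ, ENNReal.ofReal (p i) • Measure.map (aff (r i) (a i)) μ) :
    ∃ R : ℝ, 0 < R ∧ (∀ᵐ x ∂μ, x ∈ cbox d R) ∧
      ∀ i, ∀ x ∈ cbox d R, aff (r i) (a i) x ∈ cbox d R := by
  have : Nonempty (Fin d) := ⟨⟨0, hd⟩⟩
  obtain ⟨ij, hij⟩ := Finite.exists_max (fun ij : Λ × Fin d => |r ij.1 ij.2|)
  obtain ⟨ab, hab⟩ := Finite.exists_max (fun ij : Λ × Fin d => |a ij.1 ij.2|)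
  set c0 := |r ij.1 ij.2| with hc0
  set A := |a ab.1 ab.2| with hA
  obtain ⟨c, hc1, hc2⟩ := exists_between (hr ij.1 ij.2)
  have hcpos : 0 < c := lt_of_le_of_lt (abs_nonneg _) hc1
  have hA0 : 0 ≤ A := abs_nonneg _
  set R0 := A / (1 - c) with hR0
  have hR00 : 0 ≤ R0 := div_nonneg hA0 (by linarith)
  have hR0e : c * R0 + A = R0 := by
    rw [hR0]; have : 1 - c ≠ 0 := by linarith
    field_simp; ring
  have hmap : ∀ s, 0 ≤ s → ∀ i, ∀ x ∈ cbox d (R0 + s), aff (r i) (a i) x ∈ cbox d (R0 + c * s) := by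
    intro s hs i x hx j
    have h1 : |r i j * x j + a i j| ≤ |r i j| * |x j| + |a i j| := by
      rw [← abs_mul]; exact abs_add_le _ _
    have h2 : |r i j| ≤ c := (hij (i, j)).trans hc1.le
    have h3 : |a i j| ≤ A := hab (i, j)
    have h4 : |r i j| * |x j| ≤ c * (R0 + s) :=
      mul_le_mul h2 (hx j) (abs_nonneg _) hcpos.le
    have : aff (r i) (a i) x j = r i j * x j + a i j := rfl
    rw [this]; nlinarith
  have hmono : ∀ s, 0 ≤ s → μ (cbox d (R0 + s)) ≤ μ (cbox d (R0 + c * s)) := by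
    intro s hs
    have h := congrArg (fun θ : Measure (Fin d → ℝ) => θ (cbox d (R0 + c * s))) hμsa
    simp only [Measure.coe_finsetSum, Finset.sum_apply, Measure.smul_apply, smul_eq_mul] at h
    rw [h]
    have hsum1 : ∑ i, ENNReal.ofReal (p i) = 1 := by
      rw [← ENNReal.ofReal_sum_of_nonneg fun i _ => (hp0 i).le, hp1, ENNReal.ofReal_one]
    calc μ (cbox d (R0 + s)) = ∑ i, ENNReal.ofReal (p i) * μ (cbox d (R0 + s)) := by
          rw [← Finset.sum_mul, hsum1, one_mul]
      _ ≤ _ := by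
          refine Finset.sum_le_sum fun i _ => ?_
          refine mul_le_mul_right ?_ _
          rw [Measure.map_apply (aff_meas _ _) (cbox_meas _ _)]
          exact measure_mono fun x hx => hmap s hs i x hx
  have hk : ∀ k : ℕ, μ (cbox d (R0 + c⁻¹ ^ k)) ≤ μ (cbox d (R0 + 1)) := by
    intro k
    induction k with
    | zero => simp
    | succ k ih =>
      refine le_trans (hmono _ (by positivity)) ?_
      rwa [pow_succ', mul_inv_cancel_left₀ hcpos.ne']
  refine ⟨R0 + 1, by linarith, ?_, ?_⟩
  · have hU : ⋃ k : ℕ, cbox d (R0 + c⁻¹ ^ k) = Set.univ := by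
      refine Set.eq_univ_of_forall fun x => ?_
      have hinf : Tendsto (fun k : ℕ => c⁻¹ ^ k) atTop atTop :=
        tendsto_pow_atTop_atTop_of_one_lt ((one_lt_inv₀ hcpos).mpr hc2)
      obtain ⟨k, hk⟩ := (hinf.eventually_ge_atTop (∑ j, |x j|)).exists
      refine Set.mem_iUnion.mpr ⟨k, fun j => ?_⟩
      have := Finset.single_le_sum (f := fun j => |x j|) (fun j _ => abs_nonneg _)
        (Finset.mem_univ j)
      linarith
    have hmon : Monotone fun k : ℕ => cbox d (R0 + c⁻¹ ^ k) := by
      intro k k' hkk x hx j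
      refine (hx j).trans ?_
      have := pow_le_pow_right₀ ((one_lt_inv₀ hcpos).mpr hc2).le hkk
      linarith
    have ht := tendsto_measure_iUnion_atTop (μ := μ) hmon
    rw [hU, measure_univ] at ht
    have h1 : 1 ≤ μ (cbox d (R0 + 1)) := le_of_tendsto' ht hk
    exact (mem_ae_iff_prob_eq_one (cbox_meas _ _)).mpr (le_antisymm prob_le_one h1)
  · intro i x hx j
    refine (hmap 1 zero_le_one i x hx j).trans ?_
    linarith

lemma log_bound (k : ℝ) (hk : 0 ≤ k) :
    Real.log (2 * (2:ℝ) ^ k + 2) ≤ Real.log 4 + k * Real.log 2 := by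
  rw [← Real.log_rpow (by norm_num), ← Real.log_mul (by norm_num) (by positivity)]
  refine Real.log_le_log (by positivity) ?_
  have : (1:ℝ) ≤ 2 ^ k := Real.one_le_rpow (by norm_num) hk
  linarith

lemma Ecell_eq {d : ℕ} (χ : Fin d → ℝ) (hχ : ∀ j, 0 ≤ χ j) (n : ℕ) (k : Fin d → ℤ) :
    Ecell d χ n k = lgrid d (fun j => ⌊χ j * n⌋₊) ⁻¹' {k} := by
  ext x
  simp only [Ecell, Set.mem_ofPred_eq, Set.mem_preimage, Set.mem_singleton_iff, lgrid, funext_iff]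
  refine forall_congr' fun j => ?_
  have h : ((⌊χ j * n⌋₊ : ℕ) : ℤ) = ⌊χ j * n⌋ :=
    Int.natCast_floor_eq_floor (mul_nonneg (hχ j) (by positivity))
  rw [← h, zpow_natCast, Int.floor_eq_iff]
  have hp : (0:ℝ) < 2 ^ ⌊χ j * n⌋₊ := by positivity
  rw [div_le_iff₀ hp, lt_div_iff₀ hp, mul_comm (x j)]

lemma entE_eq {d : ℕ} (χ : Fin d → ℝ) (hχ : ∀ j, 0 ≤ χ j) (n : ℕ) (μ : Measure (Fin d → ℝ)) :
    entE d χ n μ = ent μ (lgrid d (fun j => ⌊χ j * n⌋₊)) / Real.log 2 := by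
  unfold entE ent
  rw [← tsum_div_const]
  refine tsum_congr fun k => ?_
  rw [Ecell_eq χ hχ, Real.negMulLog, Real.logb, Measure.real]
  ring

noncomputable def pgrid (d : ℕ) (m : ℕ) (x : Fin d → ℝ) : Fin d → ℤ :=
  fun j => ⌊(if (j:ℕ) < d - 1 then (2:ℝ) ^ m else 0) * x j⌋

lemma pgrid_meas (d m : ℕ) (i : Fin d → ℤ) : MeasurableSet (pgrid d m ⁻¹' {i}) :=
  floor_meas (h := fun j (x : Fin d → ℝ) => (if (j:ℕ) < d - 1 then (2:ℝ) ^ m else 0) * x j)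
    (fun _ _ => rfl) (fun j => (measurable_pi_apply j).const_mul _) i

lemma cell_abs {z x y : ℝ} (hz : 0 < z) (h : ⌊z * x⌋ = ⌊z * y⌋) : |x - y| ≤ 1 / z := by
  have h3 := Int.abs_sub_lt_one_of_floor_eq_floor h
  rw [← mul_sub, abs_mul, abs_of_pos hz] at h3
  rw [le_div_iff₀ hz]; linarith

lemma mul_fin {d : ℕ} {R : ℝ} {μ : Measure (Fin d → ℝ)} (hR : ∀ᵐ x ∂μ, x ∈ cbox d R)
    (α : Fin d → ℝ) (f : (Fin d → ℝ) → (Fin d → ℝ)) (hf : ∀ x ∈ cbox d R, f x ∈ cbox d R)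
    {q : (Fin d → ℝ) → Fin d → ℤ} (hq : ∀ x j, q x j = ⌊α j * f x j⌋) :
    ∀ᵐ x ∂μ, q x ∈ Fintype.piFinset fun j =>
      Finset.Icc ⌊(0:ℝ) - |α j| * R⌋ ⌊0 + |α j| * R⌋ := by
  refine hR.mono fun x hx => ?_
  refine floor_mem (h := fun j x => α j * f x j) hq (fun j => |α j| * R) fun j => ?_
  rw [abs_mul]
  exact mul_le_mul_of_nonneg_left (hf x hx j) (abs_nonneg _)

lemma base_bound {d : ℕ} (χ : Fin d → ℝ) (hχ : ∀ j, 0 < χ j)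
    (μ : Measure (Fin d → ℝ)) [IsProbabilityMeasure μ] (R : ℝ) (hR0 : 0 < R)
    (hR : ∀ᵐ x ∂μ, x ∈ cbox d R) (m : ℕ) (l : Fin d → ℕ) (n T : ℝ) (hn : 0 ≤ n)
    (hl : ∀ j, (l j : ℝ) ≤ χ j * n) (ρ b : Fin d → ℝ) (s : ℝ)
    (hρ : ∀ j, |ρ j| = (2:ℝ) ^ (-(s * χ j))) (hns : n ≤ s) (hsT : s ≤ n + T)
    (hinv : ∀ x ∈ cbox d R, aff ρ b x ∈ cbox d R) :
    ent μ (pgrid d m) - (∑ j : Fin d, if (j:ℕ) < d - 1 then n * χ j * Real.log 2 else 0) -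
      (∑ j, (Real.log 4 + T * χ j * Real.log 2) + ∑ j : Fin d, Real.log (2 * (2 * R) + 2)) ≤
      ent (Measure.map (aff ρ b) μ) (dgrid d m) - ent (Measure.map (aff ρ b) μ) (lgrid d l) := by
  rw [ent_map μ (aff_meas ρ b) (dgrid_meas d m), ent_map μ (aff_meas ρ b) (lgrid_meas d l)]
  have hlog2 : 0 < Real.log 2 := Real.log_pos (by norm_num)
  have h1 : ent μ (pgrid d m) ≤ ent μ (dgrid d m ∘ aff ρ b) + ∑ j : Fin d, Real.log (2 *
      (if (j:ℕ) < d - 1 then (2:ℝ) ^ (s * χ j) else 0) + 2) := by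
    refine ent_compare_floor (q := dgrid d m ∘ aff ρ b) (q' := pgrid d m)
      (fun i => aff_meas ρ b (dgrid_meas d m i))
      (h := fun j (x : Fin d → ℝ) => (if (j:ℕ) < d - 1 then (2:ℝ) ^ m else 0) * x j)
      (fun _ _ => rfl) (pgrid_meas d m)
      (mul_fin hR (fun _ => 2 ^ m) (aff ρ b) hinv (fun _ _ => rfl))
      (mul_fin hR (fun j => if (j:ℕ) < d - 1 then (2:ℝ) ^ m else 0) id (fun _ h => h)
        (fun _ _ => rfl)) (cbox d R) hR
      (fun j : Fin d => if (j:ℕ) < d - 1 then (2:ℝ) ^ (s * χ j) else 0)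
      (fun j => by split_ifs <;> positivity) ?_
    intro x hx y hy hxy j
    split_ifs with hj
    · have h2 := cell_abs (by positivity) (congrFun hxy j)
      simp only [aff] at h2
      rw [add_sub_add_right_eq_sub, ← mul_sub, abs_mul, hρ, Real.rpow_neg (by norm_num)] at h2
      have hp : (0:ℝ) < 2 ^ (s * χ j) := by positivity
      have hp2 : (0:ℝ) < 2 ^ m := by positivity
      rw [← mul_sub, abs_mul, abs_of_pos hp2]
      rw [le_div_iff₀ hp2, mul_assoc, inv_mul_le_iff₀ hp] at h2
      linarith
    · simp
  have h2 : ent μ (lgrid d l ∘ aff ρ b) ≤ ∑ j : Fin d, Real.log (2 * (2 * R) + 2) := by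
    have h3 := ent_compare_floor (μ := μ) (q := fun _ : Fin d → ℝ => ()) (S1 := {()})
      (fun i => by simp) (h := fun j (x : Fin d → ℝ) => (2:ℝ) ^ (l j) * aff ρ b x j)
      (q' := lgrid d l ∘ aff ρ b)
      (fun _ _ => rfl) (fun i => aff_meas ρ b (lgrid_meas d l i)) (by simp)
      (mul_fin hR (fun j => 2 ^ (l j)) (aff ρ b) hinv (fun _ _ => rfl))
      (cbox d R) hR (fun _ => 2 * R) (fun _ => by positivity) ?_
    · have h4 : ent μ (fun _ : Fin d → ℝ => ()) = 0 := by
        rw [ent_eq_sum (S := {()}) (by simp)]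
        simp
      rw [h4, zero_add] at h3
      exact h3
    · intro x hx y hy _ j
      simp only [aff]
      rw [← mul_sub, add_sub_add_right_eq_sub, ← mul_sub, ← mul_assoc, abs_mul, abs_mul, hρ,
        abs_of_pos (by positivity : (0:ℝ) < 2 ^ l j), ← Real.rpow_natCast,
        ← Real.rpow_add (by norm_num)]
      have h5 : (2:ℝ) ^ ((l j : ℝ) + -(s * χ j)) ≤ 1 := by
        refine Real.rpow_le_one_of_one_le_of_nonpos (by norm_num) ?_
        have := hl j
        have := mul_le_mul_of_nonneg_right hns (hχ j).le
        linarith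
      have h6 : |x j - y j| ≤ 2 * R := by
        have := abs_le.mp (hx j); have := abs_le.mp (hy j)
        rw [abs_le]; constructor <;> linarith
      calc _ ≤ 1 * |x j - y j| := mul_le_mul_of_nonneg_right h5 (abs_nonneg _)
        _ ≤ 2 * R := by linarith
  have h3 : ∑ j : Fin d, Real.log (2 *
      (if (j:ℕ) < d - 1 then (2:ℝ) ^ (s * χ j) else 0) + 2) ≤
      (∑ j : Fin d, if (j:ℕ) < d - 1 then n * χ j * Real.log 2 else 0) +
      ∑ j, (Real.log 4 + T * χ j * Real.log 2) := by
    rw [← Finset.sum_add_distrib]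
    refine Finset.sum_le_sum fun j _ => ?_
    have hχj := hχ j
    have hT : 0 ≤ T := by linarith
    split_ifs with hj
    · refine (log_bound (s * χ j) (mul_nonneg (hn.trans hns) hχj.le)).trans ?_
      have := mul_le_mul_of_nonneg_right (mul_le_mul_of_nonneg_right hsT hχj.le) hlog2.le
      linarith
    · have h4 : Real.log (2 * 0 + 2) ≤ Real.log 4 := Real.log_le_log (by norm_num) (by norm_num)
      have : 0 ≤ T * χ j * Real.log 2 := by positivity
      linarith
  linarith

lemma refine_bound {d : ℕ} (μ : Measure (Fin d → ℝ)) [IsProbabilityMeasure μ] (R : ℝ)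
    (hR : ∀ᵐ x ∂μ, x ∈ cbox d R) (m : ℕ) (l : Fin d → ℕ) (hl : ∀ j, l j ≤ m) :
    ent μ (dgrid d m) ≤ ent μ (lgrid d l) +
      ∑ j, (Real.log 4 + ((m:ℝ) - l j) * Real.log 2) := by
  have h1 := ent_compare_floor (μ := μ) (q' := dgrid d m) (fun i => lgrid_meas d l i)
      (h := fun j (x : Fin d → ℝ) => (2:ℝ) ^ m * x j)
      (fun _ _ => rfl) (dgrid_meas d m)
      (mul_fin hR (fun j => 2 ^ (l j)) id (fun _ h => h) (fun _ _ => rfl))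
      (mul_fin hR (fun _ => 2 ^ m) id (fun _ h => h) (fun _ _ => rfl))
      (cbox d R) hR (fun j => (2:ℝ) ^ ((m:ℝ) - l j)) (fun j => by positivity) ?_
  · refine h1.trans (add_le_add le_rfl (Finset.sum_le_sum fun j _ => log_bound _ ?_))
    have : (l j : ℝ) ≤ m := by exact_mod_cast hl j
    linarith
  · intro x hx y hy hxy j
    have h2 := cell_abs (by positivity) (congrFun hxy j)
    have hp : (0:ℝ) < 2 ^ m := by positivity
    rw [← mul_sub, abs_mul, abs_of_pos hp, Real.rpow_sub (by norm_num), Real.rpow_natCast,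
      Real.rpow_natCast, div_eq_mul_one_div]
    exact mul_le_mul_of_nonneg_left h2 hp.le

/-- Lemma 4.1 of the paper: for a diagonal self-affine measure `μ` on `ℝ^d` with distinct
Lyapunov exponents `χ₁ < … < χ_d`, linear parts in a 1-dimensional subgroup, and
`dim π_{[d−1]}μ = d−1`, one has `lim (1/n)H(μ,𝓔_n) = κ` where
`κ = χ_d · dim μ − Σ_{j<d}(χ_d − χ_j)`. -/
theorem stmt17 {Λ : Type*} [Fintype Λ] [Nonempty Λ] (d : ℕ) (hd : 1 ≤ d)
    (r a : Λ → Fin d → ℝ) (hr : ∀ i j, r i j ≠ 0 ∧ |r i j| < 1)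
    (p : Λ → ℝ) (hp0 : ∀ i, 0 < p i) (hp1 : ∑ i, p i = 1)
    (χ : Fin d → ℝ) (hχdef : ∀ j, χ j = -∑ i, p i * Real.logb 2 |r i j|)
    (hχinc : StrictMono χ)
    (hsub : ∀ i : Λ, ∃ t : ℝ, 0 < t ∧ ∀ j, -Real.logb 2 |r i j| = t * χ j)
    (μ : Measure (Fin d → ℝ)) (hμprob : IsProbabilityMeasure μ)
    (hμsa : μ = ∑ i : Λ, ENNReal.ofReal (p i) •
      Measure.map (fun x : Fin d → ℝ => fun j => r i j * x j + a i j) μ)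
    (Dμ : ℝ)
    (hdimμ : ∀ᵐ x ∂μ, Filter.Tendsto
      (fun δ : ℝ => Real.log ((μ (Metric.closedBall x δ)).toReal) / Real.log δ)
      (nhdsWithin 0 (Set.Ioi 0)) (nhds Dμ))
    (hdimproj : ∀ᵐ x ∂(Measure.map
        (fun (x : Fin d → ℝ) (j : {j : Fin d // (j : ℕ) < d - 1}) => x j) μ),
      Filter.Tendsto
        (fun δ : ℝ => Real.log
            ((Measure.map
              (fun (x : Fin d → ℝ) (j : {j : Fin d // (j : ℕ) < d - 1}) => x j) μ
              (Metric.closedBall x δ)).toReal) / Real.log δ)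
        (nhdsWithin 0 (Set.Ioi 0)) (nhds ((d : ℝ) - 1))) :
    Filter.Tendsto (fun n : ℕ => (1 / (n : ℝ)) * entE d χ n μ) Filter.atTop
      (nhds (χ ⟨d - 1, Nat.sub_lt hd one_pos⟩ * Dμ -
        ∑ j ∈ univ.filter (fun j : Fin d => (j : ℕ) < d - 1),
          (χ ⟨d - 1, Nat.sub_lt hd one_pos⟩ - χ j))) := by
  classical
  have hlog2 : 0 < Real.log 2 := Real.log_pos (by norm_num)
  have hχ : ∀ j, 0 < χ j := by
    intro j
    rw [hχdef, ← Finset.sum_neg_distrib]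
    refine Finset.sum_pos (fun i _ => ?_) Finset.univ_nonempty
    have h1 : Real.logb 2 |r i j| < 0 :=
      Real.logb_neg (by norm_num) (abs_pos.mpr (hr i j).1) (hr i j).2
    have := mul_pos (hp0 i) (neg_pos.mpr h1)
    linarith
  choose t ht0 ht using hsub
  have htr : ∀ i j, |r i j| = (2:ℝ) ^ (-(t i * χ j)) := by
    intro i j
    rw [← ht i j, neg_neg, Real.rpow_logb (by norm_num) (by norm_num) (abs_pos.mpr (hr i j).1)]
  have hsa : μ = ∑ i : Λ, ENNReal.ofReal (p i) • Measure.map (aff (r i) (a i)) μ := hμsa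
  obtain ⟨R, hR0, hR, hinv⟩ := exists_box hd r a (fun i j => (hr i j).2) p hp0 hp1 μ hsa
  obtain ⟨i0, hi0⟩ := Finite.exists_min t
  obtain ⟨i1, hi1⟩ := Finite.exists_max t
  set δ := t i0 with hδ
  set T := t i1 with hT
  set last : Fin d := ⟨d - 1, Nat.sub_lt hd one_pos⟩ with hlast
  have hmaxχ : ∀ j, χ j ≤ χ last := fun j => hχinc.monotone
    (Fin.le_def.mpr (by simp only [hlast]; have := j.2; omega))
  -- dimension facts
  have hDfin : ∀ m, ∀ᵐ x ∂μ, dgrid d m x ∈ Fintype.piFinset fun j : Fin d =>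
      Finset.Icc ⌊(0:ℝ) - |(2:ℝ) ^ m| * R⌋ ⌊0 + |(2:ℝ) ^ m| * R⌋ := fun m =>
    mul_fin hR (fun _ => 2 ^ m) id (fun _ h => h) (fun _ _ => rfl)
  obtain ⟨e1, he1, hU⟩ := upper_dim (fun m => Fintype.piFinset fun j : Fin d =>
      Finset.Icc ⌊(0:ℝ) - |(2:ℝ) ^ m| * R⌋ ⌊0 + |(2:ℝ) ^ m| * R⌋) hDfin
      (d * (Real.log 2 + Real.log (2 * R + 2))) (by
    intro m hm
    have hpos : (0:ℝ) < ((Fintype.piFinset fun j : Fin d =>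
      Finset.Icc ⌊(0:ℝ) - |(2:ℝ) ^ m| * R⌋ ⌊0 + |(2:ℝ) ^ m| * R⌋).card : ℝ) := by
      obtain ⟨x, hx⟩ := (hDfin m).exists
      exact_mod_cast Finset.card_pos.mpr ⟨_, hx⟩
    have hp2 : (1:ℝ) ≤ 2 ^ m := one_le_pow₀ (by norm_num)
    have hcb := card_box (fun _ : Fin d => (0:ℝ)) (fun _ => |(2:ℝ) ^ m| * R)
      (fun _ => by positivity)
    refine (Real.log_le_log hpos hcb).trans ?_
    rw [Finset.prod_const, Finset.card_univ, Fintype.card_fin, Real.log_pow,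
      abs_of_pos (by positivity), mul_assoc]
    refine mul_le_mul_of_nonneg_left ?_ (by positivity)
    have hm1 : (1:ℝ) ≤ m := by exact_mod_cast hm
    have hb : Real.log (2 * (2 ^ m * R) + 2) ≤ Real.log (2 ^ m * (2 * R + 2)) :=
      Real.log_le_log (by positivity) (by nlinarith)
    rw [Real.log_mul (by positivity) (by positivity), Real.log_pow] at hb
    have : 0 ≤ Real.log (2 * R + 2) := Real.log_nonneg (by linarith)
    nlinarith) Dμ hdimμ
  obtain ⟨e3, he3, hL⟩ := lower_dim (μ := μ) (id : (Fin d → ℝ) → (Fin d → ℝ)) measurable_id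
    (dgrid d) (dgrid_meas d) _ hDfin (by
    intro m x y hxy
    rw [dist_pi_le_iff (by positivity)]
    intro j
    have := cell_abs (by positivity) (congrFun hxy j)
    rw [Real.dist_eq, inv_pow, ← one_div]
    exact this) Dμ (by simpa only [Measure.map_id, id] using hdimμ)
  have hπ : Measurable (fun (x : Fin d → ℝ) (j : {j : Fin d // (j : ℕ) < d - 1}) => x j) :=
    measurable_pi_lambda _ fun j => measurable_pi_apply _
  obtain ⟨e2, he2, hL2⟩ := lower_dim (μ := μ)
    (fun (x : Fin d → ℝ) (j : {j : Fin d // (j : ℕ) < d - 1}) => x j) hπ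
    (pgrid d) (pgrid_meas d) _
    (fun m => mul_fin hR (fun j : Fin d => if (j:ℕ) < d - 1 then (2:ℝ) ^ m else 0) id
      (fun _ h => h) (fun _ _ => rfl)) (by
    intro m x y hxy
    rw [dist_pi_le_iff (by positivity)]
    intro j
    have h1 := congrFun hxy j
    simp only [pgrid, j.2, if_true] at h1
    have := cell_abs (by positivity) h1
    rw [Real.dist_eq, inv_pow, ← one_div]
    exact this) ((d:ℝ) - 1) (ae_of_ae_map hπ.aemeasurable hdimproj)
  -- the conditional entropy bound
  set K : ℝ := ∑ j, (Real.log 4 + T * χ j * Real.log 2) +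
    ∑ j : Fin d, Real.log (2 * (2 * R) + 2) with hK
  set M : ℕ → ℕ := fun n => ⌊χ last * n⌋₊ with hM
  set l : ℕ → Fin d → ℕ := fun n j => ⌊χ j * n⌋₊ with hl
  have hlM : ∀ n j, l n j ≤ M n := fun n j => Nat.floor_mono
    (mul_le_mul_of_nonneg_right (hmaxχ j) (by positivity))
  have hcond : ∀ n : ℕ, ent μ (pgrid d (M n)) -
      (∑ j : Fin d, if (j:ℕ) < d - 1 then n * χ j * Real.log 2 else 0) - K ≤
      ent μ (dgrid d (M n)) - ent μ (lgrid d (l n)) := by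
    intro n
    obtain ⟨N, hN⟩ := exists_nat_ge ((n:ℝ) / δ)
    have h1 := descent r a p hp0 hp1 μ hsa χ t δ T hi0 hi1 htr R hR hinv (M n) (l n) (hlM n) n _
      (fun ρ b s h1 h2 h3 h4 => base_bound χ hχ μ R hR0 hR (M n) (l n) n T (by positivity)
        (fun j => Nat.floor_le (mul_nonneg (hχ j).le (by positivity))) ρ b s h1 h2 h3 h4)
      N (fun _ => 1) (fun _ => 0) 0 (by simp) (by
        rw [div_le_iff₀ (ht0 i0)] at hN; simpa using hN)
      (by have := ht0 i1; positivity) (by intro x hx j; simpa [aff] using hx j)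
    have h2 : aff (fun _ : Fin d => 1) (fun _ => 0) = id := by funext x j; simp [aff]
    rw [h2, Measure.map_id] at h1
    exact h1
  -- limits
  have hMlim : Filter.Tendsto (fun n : ℕ => (M n : ℝ) / n) Filter.atTop (nhds (χ last)) :=
    (tendsto_nat_floor_mul_div_atTop (hχ last).le).comp tendsto_natCast_atTop_atTop
  have hMtop : Filter.Tendsto M Filter.atTop Filter.atTop :=
    tendsto_nat_floor_atTop.comp
      (tendsto_natCast_atTop_atTop.const_mul_atTop (hχ last))
  have hsum1 : ∑ j ∈ univ.filter (fun j : Fin d => (j : ℕ) < d - 1), (χ last - χ j) =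
      ∑ j, (χ last - χ j) := by
    refine Finset.sum_subset (Finset.filter_subset _ _) fun j _ hj => ?_
    have : j = last := by
      apply Fin.ext
      simp only [Finset.mem_filter, Finset.mem_univ, true_and] at hj
      simp only [hlast]; have := j.2; omega
    rw [this, sub_self]
  have hcardf : ((univ.filter (fun j : Fin d => (j : ℕ) < d - 1)).card : ℝ) = d - 1 := by
    have : univ.filter (fun j : Fin d => (j : ℕ) < d - 1) = univ.erase last := by
      ext j
      simp only [Finset.mem_filter, Finset.mem_univ, true_and, Finset.mem_erase, ne_eq, and_true,
        Fin.ext_iff, hlast]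
      have := j.2; omega
    rw [this, Finset.card_erase_of_mem (Finset.mem_univ _), Finset.card_univ, Fintype.card_fin,
      Nat.cast_sub hd, Nat.cast_one]
  have hinv0 : Filter.Tendsto (fun n : ℕ => 1 / (n:ℝ)) Filter.atTop (nhds 0) :=
    tendsto_one_div_atTop_nhds_zero_nat
  set Sf := ∑ j ∈ univ.filter (fun j : Fin d => (j : ℕ) < d - 1), χ j with hSf
  have hkap : ∑ j ∈ univ.filter (fun j : Fin d => (j : ℕ) < d - 1), (χ last - χ j) =
      ((d:ℝ) - 1) * χ last - Sf := by
    rw [Finset.sum_sub_distrib, Finset.sum_const, nsmul_eq_mul, hcardf]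
  have hlow : Filter.Tendsto (fun n : ℕ => ((M n : ℝ) / n * (Dμ * Real.log 2 - e3 (M n)) -
      (∑ j, (χ last - χ j)) * Real.log 2 - (d * (Real.log 4 + Real.log 2)) * (1 / n)) / Real.log 2)
      Filter.atTop (nhds ((χ last * (Dμ * Real.log 2 - 0) - (∑ j, (χ last - χ j)) * Real.log 2 -
        (d * (Real.log 4 + Real.log 2)) * 0) / Real.log 2)) :=
    (((hMlim.mul (tendsto_const_nhds.sub (he3.comp hMtop))).sub tendsto_const_nhds).sub
      (hinv0.const_mul _)).div_const _
  have hup : Filter.Tendsto (fun n : ℕ => ((M n : ℝ) / n * (Dμ * Real.log 2 + e1 (M n)) -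
      (M n : ℝ) / n * (((d:ℝ) - 1) * Real.log 2 - e2 (M n)) + Sf * Real.log 2 +
      (K + (3 ^ d + 1)) * (1 / n)) / Real.log 2)
      Filter.atTop (nhds ((χ last * (Dμ * Real.log 2 + 0) -
        χ last * (((d:ℝ) - 1) * Real.log 2 - 0) + Sf * Real.log 2 +
        (K + (3 ^ d + 1)) * 0) / Real.log 2)) :=
    ((((hMlim.mul (tendsto_const_nhds.add (he1.comp hMtop))).sub
      (hMlim.mul (tendsto_const_nhds.sub (he2.comp hMtop)))).add tendsto_const_nhds).add
      (hinv0.const_mul _)).div_const _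
  have hlowv : (χ last * (Dμ * Real.log 2 - 0) - (∑ j, (χ last - χ j)) * Real.log 2 -
        (d * (Real.log 4 + Real.log 2)) * 0) / Real.log 2 =
      χ last * Dμ - ∑ j ∈ univ.filter (fun j : Fin d => (j : ℕ) < d - 1), (χ last - χ j) := by
    rw [hsum1]; field_simp; ring
  have hupv : (χ last * (Dμ * Real.log 2 + 0) -
        χ last * (((d:ℝ) - 1) * Real.log 2 - 0) + Sf * Real.log 2 +
        (K + (3 ^ d + 1)) * 0) / Real.log 2 =
      χ last * Dμ - ∑ j ∈ univ.filter (fun j : Fin d => (j : ℕ) < d - 1), (χ last - χ j) := by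
    rw [hkap]; field_simp; ring
  rw [hlowv] at hlow
  rw [hupv] at hup
  refine tendsto_of_tendsto_of_tendsto_of_le_of_le' hlow hup ?_ ?_
  · filter_upwards [Filter.eventually_ge_atTop 1] with n hn
    have hn0 : (0:ℝ) < n := by exact_mod_cast hn
    rw [entE_eq χ (fun j => (hχ j).le) n μ, ← mul_div_assoc (1 / (n:ℝ)) (ent _ _)]
    refine div_le_div_of_nonneg_right ?_ hlog2.le
    have h1 := refine_bound μ R hR (M n) (l n) (hlM n)
    have h2 := hL (M n)
    have h3 : ∑ j, (Real.log 4 + ((M n : ℝ) - l n j) * Real.log 2) ≤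
        n * (∑ j, (χ last - χ j)) * Real.log 2 + d * (Real.log 4 + Real.log 2) := by
      calc _ ≤ ∑ j : Fin d, (n * (χ last - χ j) * Real.log 2 + (Real.log 4 + Real.log 2)) := by
            refine Finset.sum_le_sum fun j _ => ?_
            have h4 : (M n : ℝ) ≤ χ last * n :=
              Nat.floor_le (mul_nonneg (hχ last).le hn0.le)
            have h5 : χ j * n < (l n j : ℝ) + 1 := Nat.lt_floor_add_one _
            have h6 : (M n : ℝ) - l n j ≤ n * (χ last - χ j) + 1 := by linarith
            have := mul_le_mul_of_nonneg_right h6 hlog2.le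
            linarith
        _ = _ := by
            rw [Finset.sum_add_distrib, Finset.sum_const, Finset.card_univ, Fintype.card_fin,
              nsmul_eq_mul, ← Finset.sum_mul, ← Finset.mul_sum]
    rw [one_div_mul_eq_div, le_div_iff₀ hn0]
    have h7 : ((M n : ℝ) / n * (Dμ * Real.log 2 - e3 (M n)) -
      (∑ j, (χ last - χ j)) * Real.log 2 - (d * (Real.log 4 + Real.log 2)) * (1 / n)) * n =
      M n * (Dμ * Real.log 2 - e3 (M n)) - n * (∑ j, (χ last - χ j)) * Real.log 2 -
        d * (Real.log 4 + Real.log 2) := by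
      field_simp
    rw [h7]
    linarith
  · filter_upwards [Filter.eventually_ge_atTop 1, hMtop.eventually_ge_atTop 1] with n hn hMn
    have hn0 : (0:ℝ) < n := by exact_mod_cast hn
    rw [entE_eq χ (fun j => (hχ j).le) n μ, ← mul_div_assoc (1 / (n:ℝ)) (ent _ _)]
    refine div_le_div_of_nonneg_right ?_ hlog2.le
    have h1 := hcond n
    have h2 := hU (M n) hMn
    have h3 := hL2 (M n)
    have h4 : (∑ j : Fin d, if (j:ℕ) < d - 1 then n * χ j * Real.log 2 else 0) =
        n * Sf * Real.log 2 := by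
      rw [← Finset.sum_filter, ← Finset.sum_mul, ← Finset.mul_sum]
    rw [h4] at h1
    rw [one_div_mul_eq_div, div_le_iff₀ hn0]
    have h7 : ((M n : ℝ) / n * (Dμ * Real.log 2 + e1 (M n)) -
      (M n : ℝ) / n * (((d:ℝ) - 1) * Real.log 2 - e2 (M n)) + Sf * Real.log 2 +
      (K + (3 ^ d + 1)) * (1 / n)) * n =
      M n * (Dμ * Real.log 2 + e1 (M n)) - M n * (((d:ℝ) - 1) * Real.log 2 - e2 (M n)) +
        n * Sf * Real.log 2 + (K + (3 ^ d + 1)) := by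
      field_simp
    rw [h7]
    linarith
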